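/- Let 𝕍 be a finite-dimensional real vector space with inner product α, let V ∈ 𝕍 satisfy α(V,V) < 1, let F be the Randers norm F(z) = √(α(z,z)) + α(V,z), and let W ⊂ 𝕍 be a hyperplane (a linear subspace of codimension one). Then there exist vectors n₁, n₂ ∈ 𝕍 with F(n₁) = F(n₂) = 1, lying strictly on opposite sides of W, such that α(nᵢ + √(α(nᵢ,nᵢ))·V, w) = 0 for all w ∈ W and i = 1, 2. -/

import Mathlib

/-!
The vector `n + ‖n‖ • V` is `‖n‖` times the gradient of `F` at `n`, so it has to be made a multiple
of a normal `ν` of `W`. The ray from `-V` in the direction `ν` starts inside the unit ball, hence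
meets the unit sphere at some `z = -V + t • ν` with `t > 0`; then `z + ‖z‖ • V = t • ν`, and
rescaling `z` to `F z = 1` gives `n`. Euler's identity `⟪n + ‖n‖ • V, n⟫ = ‖n‖ * F n > 0` puts `n`
on the side of `W` to which `ν` points. Apply this to `ν` and to `-ν`.
-/

open scoped RealInnerProductSpace

theorem exists_pos_norm_add_smul_eq {E : Type*} [NormedAddCommGroup E] [NormedSpace ℝ E]
    {x v : E} {r : ℝ} (hx : ‖x‖ < r) (hv : v ≠ 0) : ∃ t : ℝ, 0 < t ∧ ‖x + t • v‖ = r := by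
  have hv' : 0 < ‖v‖ := norm_pos_iff.2 hv
  set T : ℝ := (r + ‖x‖) / ‖v‖
  have hT : 0 ≤ T := div_nonneg (by linarith [norm_nonneg x]) hv'.le
  have hlarge : r ≤ ‖x + T • v‖ := by
    have hTv : ‖T • v‖ = r + ‖x‖ := by
      rw [norm_smul_of_nonneg hT, div_mul_cancel₀ _ hv'.ne']
    rw [add_comm x]
    linarith [norm_le_add_norm_add (T • v) x]
  have hcont : ContinuousOn (fun t : ℝ => ‖x + t • v‖) (Set.Icc 0 T) := by fun_prop
  obtain ⟨t, ht, htr⟩ := intermediate_value_Ioc hT hcont ⟨by simpa using hx, hlarge⟩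
  exact ⟨t, ht.1, htr⟩

section InnerProductSpace

variable {E : Type*} [NormedAddCommGroup E] [InnerProductSpace ℝ E]

/-- The Randers norm `F` whose linear part is represented by `V`. It is defined for every `V`, but
positive on nonzero vectors only when `‖V‖ < 1`. -/
noncomputable def randersNorm (V z : E) : ℝ := ‖z‖ + ⟪V, z⟫

theorem randersNorm_smul_of_nonneg (V z : E) {c : ℝ} (hc : 0 ≤ c) :
    randersNorm V (c • z) = c * randersNorm V z := by
  rw [randersNorm, randersNorm, norm_smul_of_nonneg hc, real_inner_smul_right, mul_add]

theorem randersNorm_pos {V z : E} (hV : ‖V‖ < 1) (hz : z ≠ 0) : 0 < randersNorm V z := by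
  have hz' : 0 < ‖z‖ := norm_pos_iff.2 hz
  have hVz : ‖V‖ * ‖z‖ < ‖z‖ := mul_lt_of_lt_one_left hz' hV
  rw [randersNorm]
  linarith [neg_le_of_abs_le (abs_real_inner_le_norm V z)]

/-- The vector representing `‖z‖ • dF(z)`, where `F` is `randersNorm V`: its orthogonal complement
is the hyperplane to which `z` is normal in the Randers sense. The factor `‖z‖` extends it
to `z = 0`, with value `0`. -/
noncomputable def randersConormal (V z : E) : E := z + ‖z‖ • V

theorem randersConormal_smul_of_nonneg (V z : E) {c : ℝ} (hc : 0 ≤ c) :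
    randersConormal V (c • z) = c • randersConormal V z := by
  rw [randersConormal, randersConormal, norm_smul_of_nonneg hc, smul_add, mul_smul]

theorem inner_randersConormal_self (V z : E) :
    ⟪randersConormal V z, z⟫ = ‖z‖ * randersNorm V z := by
  rw [randersConormal, randersNorm, inner_add_left, real_inner_smul_left,
    real_inner_self_eq_norm_mul_norm, mul_add]

theorem inner_pos_of_randersConormal_eq_smul {V ν z : E} {c : ℝ} (hV : ‖V‖ < 1) (hz : z ≠ 0)
    (hc : 0 < c) (h : randersConormal V z = c • ν) : 0 < ⟪ν, z⟫ := by
  have hpos : 0 < c * ⟪ν, z⟫ := by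
    rw [← real_inner_smul_left, ← h, inner_randersConormal_self]
    exact mul_pos (norm_pos_iff.2 hz) (randersNorm_pos hV hz)
  exact (mul_pos_iff_of_pos_left hc).1 hpos

theorem exists_norm_eq_one_and_randersConormal_eq_smul {V ν : E} (hV : ‖V‖ < 1) (hν : ν ≠ 0) :
    ∃ (z : E) (t : ℝ), ‖z‖ = 1 ∧ 0 < t ∧ randersConormal V z = t • ν := by
  obtain ⟨t, ht, hz⟩ := exists_pos_norm_add_smul_eq (x := -V) (by rwa [norm_neg]) hν
  exact ⟨-V + t • ν, t, hz, ht, by rw [randersConormal, hz, one_smul, neg_add_cancel_comm]⟩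

theorem exists_randersNorm_eq_one_and_randersConormal_eq_smul {V ν : E} (hV : ‖V‖ < 1)
    (hν : ν ≠ 0) :
    ∃ (n : E) (c : ℝ), randersNorm V n = 1 ∧ 0 < c ∧ randersConormal V n = c • ν := by
  obtain ⟨z, t, hz, ht, hzν⟩ := exists_norm_eq_one_and_randersConormal_eq_smul hV hν
  have hF : 0 < randersNorm V z := randersNorm_pos hV (ne_zero_of_norm_ne_zero (by simp [hz]))
  have hF' : 0 < (randersNorm V z)⁻¹ := inv_pos.2 hF
  refine ⟨(randersNorm V z)⁻¹ • z, (randersNorm V z)⁻¹ * t, ?_, mul_pos hF' ht, ?_⟩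
  · rw [randersNorm_smul_of_nonneg _ _ hF'.le, inv_mul_cancel₀ hF.ne']
  · rw [randersConormal_smul_of_nonneg _ _ hF'.le, hzν, mul_smul]

theorem exists_randersNorm_eq_one_and_inner_pos {V ν : E} (hV : ‖V‖ < 1) (hν : ν ≠ 0) :
    ∃ n : E, randersNorm V n = 1 ∧ 0 < ⟪ν, n⟫ ∧ randersConormal V n ∈ Submodule.span ℝ {ν} := by
  obtain ⟨n, c, hn, hc, hnν⟩ := exists_randersNorm_eq_one_and_randersConormal_eq_smul hV hν
  have hn0 : n ≠ 0 := by
    rintro rfl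
    simp [randersNorm] at hn
  exact ⟨n, hn, inner_pos_of_randersConormal_eq_smul hV hn0 hc hnν,
    Submodule.mem_span_singleton.2 ⟨c, hnν.symm⟩⟩

theorem exists_orthogonal_eq_span_singleton_of_finrank_quotient_eq_one (W : Submodule ℝ E)
    [W.HasOrthogonalProjection] (hW : Module.finrank ℝ (E ⧸ W) = 1) :
    ∃ ν : E, ν ≠ 0 ∧ Wᗮ = Submodule.span ℝ {ν} := by
  have hWperp : Module.finrank ℝ Wᗮ = 1 :=
    W.quotientEquivOrthogonal.toLinearEquiv.finrank_eq.symm.trans hW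
  obtain ⟨ν, hν, hspan⟩ := finrank_eq_one_iff'.1 hWperp
  refine ⟨ν, by simpa using hν, le_antisymm (fun x hx => ?_) ?_⟩
  · obtain ⟨c, hc⟩ := hspan ⟨x, hx⟩
    exact Submodule.mem_span_singleton.2 ⟨c, congrArg Subtype.val hc⟩
  · simp

theorem ker_innerₗ_eq_of_orthogonal_eq_span_singleton {W : Submodule ℝ E}
    [W.HasOrthogonalProjection] {ν : E} (h : Wᗮ = Submodule.span ℝ {ν}) :
    LinearMap.ker (innerₗ E ν) = W := by
  rw [← W.orthogonal_orthogonal, h]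
  ext x
  rw [LinearMap.mem_ker, innerₗ_apply_apply, Submodule.mem_orthogonal_singleton_iff_inner_right]

end InnerProductSpace

theorem randers_normals_to_hyperplane_general {E : Type*} [NormedAddCommGroup E]
    [InnerProductSpace ℝ E] {V : E} (hV : ‖V‖ < 1) (W : Submodule ℝ E)
    [W.HasOrthogonalProjection] (hW : Module.finrank ℝ (E ⧸ W) = 1) :
    ∃ (n₁ n₂ : E) (φ : E →ₗ[ℝ] ℝ),
      LinearMap.ker φ = W ∧
      randersNorm V n₁ = 1 ∧ randersNorm V n₂ = 1 ∧
      0 < φ n₁ ∧ φ n₂ < 0 ∧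
      randersConormal V n₁ ∈ Wᗮ ∧ randersConormal V n₂ ∈ Wᗮ := by
  obtain ⟨ν, hν, hspan⟩ := exists_orthogonal_eq_span_singleton_of_finrank_quotient_eq_one W hW
  obtain ⟨n₁, hF₁, hpos₁, hn₁⟩ := exists_randersNorm_eq_one_and_inner_pos hV hν
  obtain ⟨n₂, hF₂, hpos₂, hn₂⟩ := exists_randersNorm_eq_one_and_inner_pos hV (neg_ne_zero.2 hν)
  rw [inner_neg_left, neg_pos] at hpos₂
  rw [← Set.neg_singleton, Submodule.span_neg] at hn₂
  exact ⟨n₁, n₂, innerₗ E ν, ker_innerₗ_eq_of_orthogonal_eq_span_singleton hspan,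
    hF₁, hF₂, hpos₁, hpos₂, hspan ▸ hn₁, hspan ▸ hn₂⟩

/-- The inner product given by a positive definite symmetric bilinear form, through which the
results on inner product spaces apply to a vector space carrying only the form. -/
abbrev innerProductSpaceCoreOfPosDef {E : Type*} [AddCommGroup E] [Module ℝ E]
    (α : E →ₗ[ℝ] E →ₗ[ℝ] ℝ) (hsymm : ∀ x y, α x y = α y x) (hpos : ∀ x, x ≠ 0 → 0 < α x x) :
    InnerProductSpace.Core ℝ E where
  inner x y := α x y
  conj_inner_symm x y := hsymm y x
  re_inner_nonneg x := by
    obtain rfl | hx := eq_or_ne x 0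
    · simp
    · exact (hpos x hx).le
  add_left := α.map_add₂
  smul_left x y r := α.map_smul₂ r x y
  definite x hx := by_contra fun hne => (hpos x hne).ne' hx

/-- for the Randers norm F(z) = √(α(z,z)) + α(V,z) on a
finite-dimensional real vector space with inner product α and α(V,V) < 1, and
any hyperplane W (codimension-one linear subspace), there exist vectors n₁, n₂
with F(n₁) = F(n₂) = 1, lying strictly on opposite sides of W, such that
α(nᵢ + √(α(nᵢ,nᵢ))·V, w) = 0 for all w ∈ W, i = 1, 2. -/
theorem randers_normals_to_hyperplane
    (𝕍 : Type*) [AddCommGroup 𝕍] [Module ℝ 𝕍] [FiniteDimensional ℝ 𝕍]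
    (α : 𝕍 →ₗ[ℝ] 𝕍 →ₗ[ℝ] ℝ)
    (hsymm : ∀ x y, α x y = α y x)
    (hpos : ∀ x, x ≠ 0 → 0 < α x x)
    (V : 𝕍) (hV : α V V < 1)
    (F : 𝕍 → ℝ) (hF : ∀ z, F z = Real.sqrt (α z z) + α V z)
    (W : Submodule ℝ 𝕍) (hW : Module.finrank ℝ (𝕍 ⧸ W) = 1) :
    ∃ (n₁ n₂ : 𝕍) (φ : 𝕍 →ₗ[ℝ] ℝ),
      LinearMap.ker φ = W ∧
      F n₁ = 1 ∧ F n₂ = 1 ∧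
      0 < φ n₁ ∧ φ n₂ < 0 ∧
      (∀ w ∈ W, α (n₁ + Real.sqrt (α n₁ n₁) • V) w = 0) ∧
      (∀ w ∈ W, α (n₂ + Real.sqrt (α n₂ n₂) • V) w = 0) := by
  let core := innerProductSpaceCoreOfPosDef α hsymm hpos
  let : NormedAddCommGroup 𝕍 := core.toNormedAddCommGroup
  let : InnerProductSpace ℝ 𝕍 := .ofCore core.toCore
  have hnorm : ‖V‖ < 1 := (Real.sqrt_lt' one_pos).2 (hV.trans_eq (one_pow 2).symm)
  obtain ⟨n₁, n₂, φ, hker, hF₁, hF₂, hpos₁, hpos₂, hn₁, hn₂⟩ :=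
    randers_normals_to_hyperplane_general hnorm W hW
  exact ⟨n₁, n₂, φ, hker, (hF n₁).trans hF₁, (hF n₂).trans hF₂, hpos₁, hpos₂,
    (W.mem_orthogonal' _).1 hn₁, (W.mem_orthogonal' _).1 hn₂⟩
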